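/- The only ℂ-linear subspaces of ℂ[X] stable under the three operators x, s and T are 0 and ℂ[X] if and only if c ∉ 1/2 + ℤ_{≥0}; i.e. the standard module Δ(ℂ) = ℂ[X] of the type-A₁ rational Cherednik algebra H_{1,c} is irreducible if and only if c is not of the form 1/2 + m with m a nonnegative integer. -/

import Mathlib

open Polynomial

/-- The involution `s` of `ℂ[X]` determined by `X ↦ -X`. -/
noncomputable def cherednikS (f : Polynomial ℂ) : Polynomial ℂ := f.comp (-X)

/-- The one-variable Dunkl operator `T f = f' + c g`, where `g` is the unique
polynomial with `X g = s(f) - f`. -/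
noncomputable def cherednikT (c : ℂ) (f : Polynomial ℂ) : Polynomial ℂ :=
  derivative f + C c * ((cherednikS f - f) /ₘ X)

/-!
On monomials, `T X ^ (n + 1) = a n • X ^ n` with `a n = n + 1` for `n` odd and
`a n = n + 1 - 2 c` for `n` even. If no `a n` vanishes, applying `T` to a nonzero polynomial as many
times as its degree leaves a nonzero constant, which generates `ℂ[X]` under multiplication by `X`.
If `a n = 0`, the chain `X ^ (n + 1) ↦ X ^ n` is cut, so that the ideal `(X ^ (n + 1))` is stable.
Some `a n` vanishes exactly when `2 c` is an odd positive integer.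
-/

lemma eq_top_of_one_mem_of_X_mul_mem {R : Type*} [Semiring R] {M : Submodule R R[X]}
    (h1 : 1 ∈ M) (hX : ∀ f ∈ M, X * f ∈ M) : M = ⊤ := by
  refine Submodule.eq_top_iff'.mpr fun p => ?_
  induction p using Polynomial.induction_on with
  | C r => simpa only [smul_eq_C_mul, mul_one] using M.smul_mem r h1
  | add p q hp hq => exact M.add_mem hp hq
  | monomial n r hn => simpa only [pow_succ', ← mul_assoc, X_mul_C] using hX _ hn

section CommSemiring

variable {R : Type*} [CommSemiring R]

/-- `T` is the backward shift of the monomial basis with weights `a`: it is the linear map sending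
`X ^ (n + 1)` to `a n • X ^ n` and `1` to `0`. It is described through coefficients, from which
linearity follows. -/
def IsWeightedBackwardShift (a : ℕ → R) (T : R[X] → R[X]) : Prop :=
  ∀ f n, (T f).coeff n = a n * f.coeff (n + 1)

namespace IsWeightedBackwardShift

variable {a : ℕ → R} {T : R[X] → R[X]}

lemma coeff_iterate (hT : IsWeightedBackwardShift a T) (k : ℕ) (f : R[X]) (n : ℕ) :
    (T^[k] f).coeff n = (∏ i ∈ Finset.range k, a (n + i)) * f.coeff (n + k) := by
  induction k generalizing f with
  | zero => simp only [Function.iterate_zero_apply, Finset.prod_range_zero, one_mul, add_zero]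
  | succ k ih =>
    rw [Function.iterate_succ_apply, ih, hT, Finset.prod_range_succ, mul_assoc, add_assoc]

lemma iterate_natDegree (hT : IsWeightedBackwardShift a T) (f : R[X]) :
    T^[f.natDegree] f = C ((∏ i ∈ Finset.range f.natDegree, a i) * f.leadingCoeff) := by
  ext n
  rw [hT.coeff_iterate]
  cases n with
  | zero => simp only [zero_add, coeff_C_zero, coeff_natDegree]
  | succ n => rw [coeff_C_succ, coeff_eq_zero_of_natDegree_lt (by lia), mul_zero]

lemma X_pow_succ_dvd_apply (hT : IsWeightedBackwardShift a T) {n : ℕ} (hn : a n = 0) {f : R[X]}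
    (hf : X ^ (n + 1) ∣ f) : X ^ (n + 1) ∣ T f := by
  rw [X_pow_dvd_iff] at hf ⊢
  intro k hk
  rw [hT]
  obtain rfl | hlt := Nat.eq_or_lt_of_le (Nat.le_of_lt_succ hk)
  · rw [hn, zero_mul]
  · rw [hf _ (Nat.succ_lt_succ hlt), mul_zero]

end IsWeightedBackwardShift

end CommSemiring

section Ring

variable {R : Type*} [Ring R]

lemma coeff_comp_neg_X (f : R[X]) (n : ℕ) : (f.comp (-X)).coeff n = f.coeff n * (-1) ^ n := by
  have neg_X_eq : (-X : R[X]) = C (-1) * X := by rw [C_neg, C_1, neg_one_mul]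
  rw [neg_X_eq, comp_C_mul_X_coeff]

lemma X_pow_dvd_comp_neg_X {n : ℕ} {f : R[X]} (hf : X ^ n ∣ f) : X ^ n ∣ f.comp (-X) := by
  rw [X_pow_dvd_iff] at hf ⊢
  intro k hk
  rw [coeff_comp_neg_X, hf k hk, zero_mul]

lemma divByMonic_X_eq_divX (f : R[X]) : f /ₘ X = f.divX := by
  nontriviality R
  have division : C (f.coeff 0) + X * f.divX = f := by rw [add_comm, X_mul_divX_add]
  have remainder_degree_lt : (C (f.coeff 0)).degree < (X : R[X]).degree := by
    rw [degree_X]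
    exact degree_C_lt
  exact (div_modByMonic_unique _ _ monic_X ⟨division, remainder_degree_lt⟩).1

end Ring

section CommRing

variable {R : Type*} [CommRing R]

/-- The one-variable Dunkl operator `d/dX + (c/X)(s - 1)` over an arbitrary commutative ring, where
`s` is the substitution `X ↦ -X`. Since `s f - f` has no constant term, `divX` divides it exactly
by `X`. -/
noncomputable def dunklOperator (c : R) (f : R[X]) : R[X] :=
  derivative f + C c * (f.comp (-X) - f).divX

/-- The scalar by which the Dunkl operator maps `X ^ (n + 1)` to a multiple of `X ^ n`. -/
def dunklWeight (c : R) (n : ℕ) : R := (n + 1) + c * ((-1) ^ (n + 1) - 1)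

lemma isWeightedBackwardShift_dunklOperator (c : R) :
    IsWeightedBackwardShift (dunklWeight c) (dunklOperator c) := by
  intro f n
  simp only [dunklOperator, dunklWeight, coeff_add, coeff_derivative, coeff_C_mul, coeff_divX,
    coeff_sub, coeff_comp_neg_X]
  ring

end CommRing

section Field

variable {K : Type*} [Field K]

namespace IsWeightedBackwardShift

variable {a : ℕ → K} {T : K[X] → K[X]}

lemma one_mem_of_ne_bot (hT : IsWeightedBackwardShift a T) (ha : ∀ n, a n ≠ 0)
    {M : Submodule K K[X]} (hTM : ∀ f ∈ M, T f ∈ M) (hM : M ≠ ⊥) : 1 ∈ M := by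
  obtain ⟨f, hfM, hf⟩ := M.ne_bot_iff.mp hM
  have iterate_mem : T^[f.natDegree] f ∈ M :=
    Set.MapsTo.iterate (s := (M : Set K[X])) (fun g hg => hTM g hg) _ hfM
  have const_ne_zero : (∏ i ∈ Finset.range f.natDegree, a i) * f.leadingCoeff ≠ 0 :=
    mul_ne_zero (Finset.prod_ne_zero_iff.mpr fun i _ => ha i) (leadingCoeff_ne_zero.mpr hf)
  rw [hT.iterate_natDegree, ← mul_one (C _), ← smul_eq_C_mul] at iterate_mem
  exact (M.smul_mem_iff const_ne_zero).mp iterate_mem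

theorem forall_stable_eq_bot_or_eq_top_iff (hT : IsWeightedBackwardShift a T) :
    (∀ M : Submodule K K[X],
      (∀ f ∈ M, X * f ∈ M) → (∀ f ∈ M, f.comp (-X) ∈ M) → (∀ f ∈ M, T f ∈ M) →
      M = ⊥ ∨ M = ⊤) ↔ ∀ n, a n ≠ 0 := by
  constructor
  · intro h n hn
    let I : Ideal K[X] := Ideal.span {X ^ (n + 1)}
    have mem_I {f : K[X]} : f ∈ I.restrictScalars K ↔ X ^ (n + 1) ∣ f := Ideal.mem_span_singleton
    have I_trivial := h (I.restrictScalars K) (fun f hf => I.mul_mem_left X hf)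
      (fun f hf => mem_I.mpr (X_pow_dvd_comp_neg_X (mem_I.mp hf)))
      (fun f hf => mem_I.mpr (hT.X_pow_succ_dvd_apply hn (mem_I.mp hf)))
    rw [Submodule.restrictScalars_eq_bot_iff, Submodule.restrictScalars_eq_top_iff,
      Ideal.span_singleton_eq_bot, Ideal.span_singleton_eq_top] at I_trivial
    exact I_trivial.elim (pow_ne_zero _ X_ne_zero)
      fun X_pow_isUnit => not_isUnit_X (isUnit_pow_succ_iff.mp X_pow_isUnit)
  · intro ha M hX _ hTM
    exact or_iff_not_imp_left.mpr fun hM =>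
      eq_top_of_one_mem_of_X_mul_mem (hT.one_mem_of_ne_bot ha hTM hM) hX

end IsWeightedBackwardShift

variable [CharZero K]

lemma exists_dunklWeight_eq_zero_iff (c : K) :
    (∃ n, dunklWeight c n = 0) ↔ ∃ m : ℕ, c = 1 / 2 + (m : K) := by
  constructor
  · rintro ⟨n, hn⟩
    rw [dunklWeight] at hn
    obtain even | odd := (n + 1).even_or_odd
    · rw [even.neg_one_pow, sub_self, mul_zero, add_zero] at hn
      exact absurd hn n.cast_add_one_ne_zero
    · obtain ⟨m, hm⟩ := odd
      obtain rfl : n = 2 * m := by lia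
      rw [(odd_two_mul_add_one m).neg_one_pow] at hn
      push_cast at hn
      exact ⟨m, by linear_combination (-1 / 2) * hn⟩
  · rintro ⟨m, rfl⟩
    refine ⟨2 * m, ?_⟩
    rw [dunklWeight, (odd_two_mul_add_one m).neg_one_pow]
    push_cast
    ring

theorem polyRep_irreducible_iff_general (c : K) :
    (∀ M : Submodule K K[X],
      (∀ f ∈ M, X * f ∈ M) → (∀ f ∈ M, f.comp (-X) ∈ M) → (∀ f ∈ M, dunklOperator c f ∈ M) →
      M = ⊥ ∨ M = ⊤) ↔ ¬∃ m : ℕ, c = 1 / 2 + (m : K) := by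
  rw [(isWeightedBackwardShift_dunklOperator c).forall_stable_eq_bot_or_eq_top_iff,
    ← exists_dunklWeight_eq_zero_iff, not_exists]

end Field

lemma cherednikT_eq_dunklOperator (c : ℂ) : cherednikT c = dunklOperator c :=
  funext fun f => by rw [cherednikT, divByMonic_X_eq_divX, cherednikS, dunklOperator]

/-- The standard module `Δ(ℂ) = ℂ[X]` of the type `A₁` rational Cherednik algebra
`H_{1,c}` is irreducible (the only subspaces stable under `x`, `s` and `T` are `0`
and `ℂ[X]`) if and only if `c ∉ 1/2 + ℤ_{≥0}`. -/
theorem polyRep_irreducible_iff (c : ℂ) :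
    (∀ M : Submodule ℂ (Polynomial ℂ),
      (∀ f ∈ M, X * f ∈ M) → (∀ f ∈ M, cherednikS f ∈ M) → (∀ f ∈ M, cherednikT c f ∈ M) →
      M = ⊥ ∨ M = ⊤) ↔ ¬∃ m : ℕ, c = 1/2 + (m : ℂ) := by
  rw [cherednikT_eq_dunklOperator]
  exact polyRep_irreducible_iff_general c
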